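/- Let a, b ≥ 0 be integers, set d = a + b + 2, and let k be an integer with 0 ≤ k ≤ min(a,b) + 1. Then (a+1)! · (b+1)! · ∑_{i=0}^{d} A(d+1,i) · i^k = (d+1)! · ∑_{u=0}^{a} ∑_{v=0}^{b} A(a+1,u) · A(b+1,v) · (1 + u + v)^k. (Equivalently, E[X_d^k] = E[(1 + X_a + X_b)^k], where X_n denotes the number of descents of a uniformly random permutation of {1,...,n+1} and X_a, X_b are independent.) -/

import Mathlib

open Finset

/-- The number of descents of a permutation of `Fin n`. -/
def descentCount {n : ℕ} (σ : Equiv.Perm (Fin n)) : ℕ :=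
  (Finset.univ.filter fun i : Fin n =>
    ∃ h : (i : ℕ) + 1 < n, σ ⟨(i : ℕ) + 1, h⟩ < σ i).card

/-- The Eulerian number `A(n,k)`: the number of permutations of `{1,…,n}` with
exactly `k` descents. -/
def eulerian (n k : ℕ) : ℕ :=
  (Finset.univ.filter fun σ : Equiv.Perm (Fin n) => descentCount σ = k).card

/-!
Write `Eₙ(t) = ∑_{σ ∈ Sₙ} e^{t (des σ + 1)}`. Inserting the letter `n + 1` into a permutation of
`{1, …, n}` gives `Eₙ₊₁ = (n + 1) eᵗ Eₙ + (1 - eᵗ) Eₙ'`. With `w = (eᵗ - 1) / t`, the operator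
`F ↦ (n + 1) eᵗ F + (1 - eᵗ) F'` maps `wⁿ⁺¹` exactly to `(n + 1) wⁿ⁺²` and multiples of `tⁿ⁺¹` to
multiples of `tⁿ⁺²`, so by induction `Eₙ ≡ n! wⁿ⁺¹` modulo `tⁿ⁺¹`. Hence `m! n! E_{m+n+1}` and
`(m+n+1)! Eₘ Eₙ` are both congruent to `m! n! (m+n+1)! w^{m+n+2}` modulo `t^{min(m,n)+1}`; dividing
by the unit `eᵗ` and comparing the coefficients of `tᵏ` gives the equality of moments.
-/

section Descents

variable {n : ℕ}

/-- `σ` has a descent at the (0-based) position `i`, the event counted by `descentCount`; the last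
position is never a descent. -/
def IsDescent (σ : Equiv.Perm (Fin n)) (i : Fin n) : Prop :=
  ∃ h : (i : ℕ) + 1 < n, σ ⟨(i : ℕ) + 1, h⟩ < σ i

instance (σ : Equiv.Perm (Fin n)) : DecidablePred (IsDescent σ) := fun i =>
  inferInstanceAs (Decidable (∃ h : (i : ℕ) + 1 < n, σ ⟨(i : ℕ) + 1, h⟩ < σ i))

theorem IsDescent.succ_ne_last {σ : Equiv.Perm (Fin n)} {i : Fin n} (hi : IsDescent σ i) :
    i.succ ≠ Fin.last n :=
  Fin.ne_of_lt hi.1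

theorem descentCount_eq_card_isDescent (σ : Equiv.Perm (Fin n)) :
    descentCount σ = #{i | IsDescent σ i} :=
  rfl

theorem descentCount_le (σ : Equiv.Perm (Fin n)) : descentCount σ ≤ n :=
  (card_le_univ _).trans_eq (Fintype.card_fin n)

theorem descentCount_lt (hn : n ≠ 0) (σ : Equiv.Perm (Fin n)) : descentCount σ < n := by
  have hlast : ¬ IsDescent σ ⟨n - 1, by lia⟩ := fun ⟨h, _⟩ => by simp only at h; lia
  have hcard := card_lt_univ_of_notMem (s := {i | IsDescent σ i}) (by simpa using hlast)
  rwa [Fintype.card_fin] at hcard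

theorem sum_eulerian_mul {R : Type*} [Semiring R] (hn : n ≠ 0) (f : ℕ → R) :
    ∑ i ∈ range n, (eulerian n i : R) * f i =
      ∑ σ : Equiv.Perm (Fin n), f (descentCount σ) := by
  rw [← sum_fiberwise_of_maps_to fun σ _ => mem_range.2 (descentCount_lt hn σ)]
  refine sum_congr rfl fun i _ => ?_
  rw [sum_congr rfl fun σ hσ => congrArg f (mem_filter.1 hσ).2, sum_const, nsmul_eq_mul, eulerian]

/-- The permutation of `Fin (n + 1)` whose one-line notation is that of `σ` with the new largest
letter inserted at position `p`, so that the positions of the old letters are `p.succAbove i`. Every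
permutation of `Fin (n + 1)` arises once, which gives the recursion of the descent statistic. -/
def insertMax (p : Fin (n + 1)) (σ : Equiv.Perm (Fin n)) : Equiv.Perm (Fin (n + 1)) :=
  (finSuccEquiv' p).trans (σ.optionCongr.trans (finSuccEquiv' (Fin.last n)).symm)

@[simp]
theorem insertMax_self (p : Fin (n + 1)) (σ : Equiv.Perm (Fin n)) :
    insertMax p σ p = Fin.last n := by
  simp [insertMax]

@[simp]
theorem insertMax_succAbove (p : Fin (n + 1)) (σ : Equiv.Perm (Fin n)) (i : Fin n) :
    insertMax p σ (p.succAbove i) = (σ i).castSucc := by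
  simp [insertMax]

theorem insertMax_bijective (n : ℕ) :
    Function.Bijective fun x : Fin (n + 1) × Equiv.Perm (Fin n) => insertMax x.1 x.2 := by
  rw [Fintype.bijective_iff_injective_and_card]
  refine ⟨?_, by simp [Fintype.card_perm, Nat.factorial_succ]⟩
  rintro ⟨p, σ⟩ ⟨q, τ⟩ (h : insertMax p σ = insertMax q τ)
  obtain rfl : p = q := (insertMax p σ).injective (by rw [insertMax_self, h, insertMax_self])
  have hστ : σ = τ := Equiv.ext fun i => Fin.castSucc_injective n <| by
    rw [← insertMax_succAbove p, h, insertMax_succAbove]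
  rw [hστ]

theorem isDescent_insertMax_self {p : Fin (n + 1)} {σ : Equiv.Perm (Fin n)} :
    IsDescent (insertMax p σ) p ↔ p ≠ Fin.last n := by
  constructor
  · rintro ⟨h, -⟩ rfl
    exact h.ne rfl
  · intro hp
    have hlt : (p : ℕ) < n := Fin.val_lt_last hp
    refine ⟨by lia, ?_⟩
    rw [insertMax_self, Fin.lt_last_iff_ne_last, ← insertMax_self p σ,
      (insertMax p σ).injective.ne_iff, Fin.ne_iff_vne]
    exact (p : ℕ).succ_ne_self

theorem val_succAbove_add_one {p : Fin (n + 1)} {j : Fin n} (hp : j.succ ≠ p)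
    (hj : (j : ℕ) + 1 < n) : (p.succAbove j : ℕ) + 1 = p.succAbove ⟨j + 1, hj⟩ := by
  have hne : (j : ℕ) + 1 ≠ p := Fin.val_ne_of_ne hp
  simp only [Fin.succAbove, Fin.lt_def, Fin.val_castSucc]
  split_ifs <;> simp only [Fin.val_castSucc, Fin.val_succ] <;> lia

theorem isDescent_insertMax_succAbove {p : Fin (n + 1)} {σ : Equiv.Perm (Fin n)} {j : Fin n} :
    IsDescent (insertMax p σ) (p.succAbove j) ↔ IsDescent σ j ∧ j.succ ≠ p := by
  constructor
  · rintro ⟨h, hlt⟩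
    rw [insertMax_succAbove] at hlt
    have hp : j.succ ≠ p := by
      rintro rfl
      simp only [Fin.succAbove_succ_self, Fin.val_castSucc] at hlt
      exact (Fin.le_last _).not_gt ((insertMax_self j.succ σ).symm.trans_lt hlt)
    have hj : (j : ℕ) + 1 < n := by
      have hne : (j : ℕ) + 1 ≠ p := Fin.val_ne_of_ne hp
      simp only [Fin.succAbove, Fin.lt_def, Fin.val_castSucc] at h
      split_ifs at h <;> simp only [Fin.val_castSucc, Fin.val_succ] at h <;> lia
    simp only [val_succAbove_add_one hp hj, Fin.eta, insertMax_succAbove,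
      Fin.castSucc_lt_castSucc_iff] at hlt
    exact ⟨⟨hj, hlt⟩, hp⟩
  · rintro ⟨⟨hj, hlt⟩, hp⟩
    refine ⟨by rw [val_succAbove_add_one hp hj]; exact Fin.isLt _, ?_⟩
    simpa only [val_succAbove_add_one hp hj, Fin.eta, insertMax_succAbove,
      Fin.castSucc_lt_castSucc_iff] using hlt

theorem descentCount_insertMax (p : Fin (n + 1)) (σ : Equiv.Perm (Fin n)) :
    descentCount (insertMax p σ) =
      if p = Fin.last n ∨ ∃ j, IsDescent σ j ∧ j.succ = p then descentCount σ
      else descentCount σ + 1 := by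
  have hcount : descentCount (insertMax p σ) =
      (if p = Fin.last n then 0 else 1) + #{j | IsDescent σ j ∧ j.succ ≠ p} := by
    simp only [descentCount_eq_card_isDescent, card_filter, Fin.sum_univ_succAbove _ p,
      isDescent_insertMax_self, isDescent_insertMax_succAbove, ite_not]
  rw [hcount]
  by_cases hdesc : ∃ j, IsDescent σ j ∧ j.succ = p
  · obtain ⟨j, hj, rfl⟩ := hdesc
    have herase : ({i | IsDescent σ i ∧ i.succ ≠ j.succ} : Finset (Fin n)) =
        ({i | IsDescent σ i} : Finset (Fin n)).erase j := by
      ext i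
      simp [and_comm]
    rw [if_neg hj.succ_ne_last, if_pos (.inr ⟨j, hj, rfl⟩), herase, add_comm]
    exact card_erase_add_one (mem_filter_univ j |>.2 hj)
  · have hall : ∀ j, IsDescent σ j ∧ j.succ ≠ p ↔ IsDescent σ j := fun j =>
      and_iff_left_of_imp fun hj hp => hdesc ⟨j, hj, hp⟩
    simp only [hall, hdesc, or_false, ← descentCount_eq_card_isDescent]
    split_ifs <;> ring

theorem sum_descentCount_insertMax {M : Type*} [AddCommMonoid M] (f : ℕ → M)
    (σ : Equiv.Perm (Fin n)) :
    ∑ p, f (descentCount (insertMax p σ)) =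
      (descentCount σ + 1) • f (descentCount σ) +
        (n - descentCount σ) • f (descentCount σ + 1) := by
  set s : Finset (Fin (n + 1)) := {p | p = Fin.last n ∨ ∃ j, IsDescent σ j ∧ j.succ = p} with hs
  have hlast : Fin.last n ∉ ({j | IsDescent σ j} : Finset (Fin n)).map (Fin.succEmb n) := by
    simp only [mem_map, mem_filter_univ, Fin.coe_succEmb]
    exact fun ⟨j, hj, hj_last⟩ => hj.succ_ne_last hj_last
  have hs_eq : s = cons (Fin.last n) _ hlast := by
    ext p
    simp [hs]
  have hcard : #s = descentCount σ + 1 := by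
    rw [hs_eq, card_cons, card_map, descentCount_eq_card_isDescent]
  have hcard_compl : #sᶜ = n - descentCount σ := by
    rw [card_compl, hcard, Fintype.card_fin, Nat.add_sub_add_right]
  simp only [descentCount_insertMax, apply_ite f]
  rw [sum_ite, sum_const, sum_const, ← hs, hcard, filter_not, ← compl_eq_univ_sdiff, hcard_compl]

end Descents

section Series

open PowerSeries

variable (A : Type*) [CommRing A] [Algebra ℚ A]

/-- The series `∑_σ e^{(des σ + 1) t}` over the permutations `σ` of `Fin n`, which is the Eulerian
polynomial `∑_σ x^{des σ + 1}` at `x = eᵗ`. It is the exponential generating function of the power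
sums of `des σ + 1`. -/
noncomputable def eulerianSeries (n : ℕ) : A⟦X⟧ :=
  ∑ σ : Equiv.Perm (Fin n), exp A ^ (descentCount σ + 1)

/-- The series `(eᵗ - 1) / t`, whose powers give the leading terms of `eulerianSeries`. It is given
by its coefficients because `X` is not invertible in `A⟦X⟧`. -/
noncomputable def expSubOneDivX : A⟦X⟧ :=
  PowerSeries.mk fun n => coeff (n + 1) (exp A)

theorem X_mul_expSubOneDivX : X * expSubOneDivX A = exp A - 1 := by
  rw [expSubOneDivX, ← sub_const_eq_X_mul_shift, constantCoeff_exp, map_one]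

theorem expSubOneDivX_add_X_mul_derivative :
    expSubOneDivX A + X * d⁄dX A (expSubOneDivX A) = exp A := by
  have h := congrArg (d⁄dX A) (X_mul_expSubOneDivX A)
  rw [map_sub, derivative_exp, derivative_one, sub_zero, Derivation.leibniz, derivative_X] at h
  linear_combination h

theorem eulerianSeries_zero : eulerianSeries A 0 = exp A := by
  simp [eulerianSeries, descentCount]

/-- The operator `F ↦ (n + 1) eᵗ F + (1 - eᵗ) F'`, which takes `eulerianSeries A n` to
`eulerianSeries A (n + 1)`. -/
noncomputable def eulerianStep (n : ℕ) : A⟦X⟧ →ₗ[A] A⟦X⟧ :=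
  LinearMap.mulLeft A ((n + 1) * exp A) + LinearMap.mulLeft A (1 - exp A) ∘ₗ (d⁄dX A).toLinearMap

variable {A}

theorem eulerianStep_apply (n : ℕ) (F : A⟦X⟧) :
    eulerianStep A n F = (n + 1) * exp A * F + (1 - exp A) * d⁄dX A F :=
  rfl

theorem eulerianStep_expSubOneDivX_pow (n : ℕ) :
    eulerianStep A n (expSubOneDivX A ^ (n + 1)) = (n + 1) * expSubOneDivX A ^ (n + 2) := by
  have hX := X_mul_expSubOneDivX A
  have hd := expSubOneDivX_add_X_mul_derivative A
  rw [eulerianStep_apply, derivative_pow, Nat.add_sub_cancel]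
  push_cast
  linear_combination -(n + 1) * expSubOneDivX A ^ n *
    (expSubOneDivX A * hd - d⁄dX A (expSubOneDivX A) * hX)

theorem X_pow_dvd_eulerianStep {n : ℕ} {F : A⟦X⟧} (hF : X ^ (n + 1) ∣ F) :
    X ^ (n + 2) ∣ eulerianStep A n F := by
  obtain ⟨T, rfl⟩ := hF
  have hX := X_mul_expSubOneDivX A
  have hd := expSubOneDivX_add_X_mul_derivative A
  refine ⟨(n + 1) * d⁄dX A (expSubOneDivX A) * T - expSubOneDivX A * d⁄dX A T, ?_⟩
  rw [eulerianStep_apply, Derivation.leibniz, derivative_pow, derivative_X, Nat.add_sub_cancel]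
  simp only [smul_eq_mul]
  push_cast
  linear_combination -(n + 1) * X ^ (n + 1) * T * hd +
    (X ^ (n + 1) * d⁄dX A T + (n + 1) * X ^ n * T) * hX

theorem eulerianStep_exp_pow {n d : ℕ} (hd : d ≤ n) :
    eulerianStep A n (exp A ^ (d + 1)) =
      (d + 1) • exp A ^ (d + 1) + (n - d) • exp A ^ (d + 2) := by
  rw [eulerianStep_apply, derivative_pow, derivative_exp, Nat.add_sub_cancel, nsmul_eq_mul,
    nsmul_eq_mul]
  push_cast [hd]
  ring

variable (A)

theorem eulerianSeries_succ (n : ℕ) :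
    eulerianSeries A (n + 1) = eulerianStep A n (eulerianSeries A n) := by
  rw [eulerianSeries, ← (insertMax_bijective n).sum_comp, Fintype.sum_prod_type_right,
    eulerianSeries, map_sum]
  refine sum_congr rfl fun σ _ => ?_
  rw [sum_descentCount_insertMax (fun d => exp A ^ (d + 1)),
    eulerianStep_exp_pow (descentCount_le σ)]

theorem X_pow_dvd_eulerianSeries_sub (n : ℕ) :
    X ^ (n + 1) ∣ eulerianSeries A n - (n.factorial : A⟦X⟧) * expSubOneDivX A ^ (n + 1) := by
  induction n with
  | zero =>
    refine ⟨d⁄dX A (expSubOneDivX A), ?_⟩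
    rw [eulerianSeries_zero, ← expSubOneDivX_add_X_mul_derivative]
    simp
  | succ n ih =>
    have hstep := X_pow_dvd_eulerianStep ih
    rw [map_sub, ← eulerianSeries_succ, ← nsmul_eq_mul, map_nsmul,
      eulerianStep_expSubOneDivX_pow] at hstep
    convert! hstep using 2
    rw [nsmul_eq_mul, Nat.factorial_succ]
    push_cast
    ring

theorem X_pow_dvd_eulerianSeries_mul_sub (m n : ℕ) :
    X ^ (min m n + 1) ∣ (m.factorial * n.factorial : A⟦X⟧) * eulerianSeries A (m + n + 1) -
      ((m + n + 1).factorial : A⟦X⟧) * (eulerianSeries A m * eulerianSeries A n) := by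
  have hmod {l : ℕ} (hl : min m n ≤ l) : X ^ (min m n + 1) ∣
      eulerianSeries A l - (l.factorial : A⟦X⟧) * expSubOneDivX A ^ (l + 1) :=
    (pow_dvd_pow X (by lia)).trans (X_pow_dvd_eulerianSeries_sub A l)
  have hprod := dvd_mul_sub_mul (hmod (min_le_left m n)) (hmod (min_le_right m n))
  have hsum := hmod (l := m + n + 1) (by lia)
  convert! dvd_sub (hsum.mul_left (m.factorial * n.factorial))
    (hprod.mul_left (m + n + 1).factorial) using 1
  ring

theorem X_pow_dvd_sum_exp_pow_descentCount_sub (m n : ℕ) :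
    X ^ (min m n + 1) ∣
      (m.factorial * n.factorial) •
          ∑ σ : Equiv.Perm (Fin (m + n + 1)), exp A ^ descentCount σ -
        (m + n + 1).factorial • ∑ σ : Equiv.Perm (Fin m), ∑ τ : Equiv.Perm (Fin n),
          exp A ^ (1 + descentCount σ + descentCount τ) := by
  have hdvd := X_pow_dvd_eulerianSeries_mul_sub A m n
  rw [← (isUnit_exp A).dvd_mul_left]
  convert! hdvd using 1
  simp only [eulerianSeries, pow_add, pow_one, ← mul_sum, ← sum_mul, nsmul_eq_mul, Nat.cast_mul]
  ring

theorem coeff_exp_pow (j k : ℕ) :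
    coeff k (exp A ^ j) = j ^ k * algebraMap ℚ A (1 / k.factorial) := by
  rw [exp_pow_eq_rescale_exp, coeff_rescale, coeff_exp]

theorem sum_descentCount_pow {m n k : ℕ} (hk : k ≤ min m n) :
    (m.factorial * n.factorial : ℚ) *
        ∑ σ : Equiv.Perm (Fin (m + n + 1)), (descentCount σ : ℚ) ^ k =
      (m + n + 1).factorial * ∑ σ : Equiv.Perm (Fin m), ∑ τ : Equiv.Perm (Fin n),
        (1 + descentCount σ + descentCount τ : ℚ) ^ k := by
  have hcoeff := X_pow_dvd_iff.1 (X_pow_dvd_sum_exp_pow_descentCount_sub ℚ m n) k (by lia)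
  simp only [map_sub, map_nsmul, map_sum, coeff_exp_pow, ← sum_mul, ← smul_mul_assoc,
    sub_eq_zero] at hcoeff
  have hk_unit : algebraMap ℚ ℚ (1 / k.factorial) ≠ 0 := by
    simp [Nat.factorial_ne_zero]
  simpa using mul_right_cancel₀ hk_unit hcoeff

end Series

/-- For `d = a + b + 2` and `k ≤ min(a,b) + 1`,
`E[X_d^k] = E[(1 + X_a + X_b)^k]` for the descent statistics. -/
theorem stmt7 (a b k : ℕ) (hk : k ≤ min a b + 1) :
    (Nat.factorial (a + 1) : ℚ) * (Nat.factorial (b + 1) : ℚ) *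
        ∑ i ∈ Finset.range (a + b + 3), (eulerian (a + b + 3) i : ℚ) * (i : ℚ) ^ k
      = (Nat.factorial (a + b + 3) : ℚ) *
          ∑ u ∈ Finset.range (a + 1), ∑ v ∈ Finset.range (b + 1),
            (eulerian (a + 1) u : ℚ) * (eulerian (b + 1) v : ℚ) *
              (1 + (u : ℚ) + (v : ℚ)) ^ k := by
  have hcard : a + b + 3 = (a + 1) + (b + 1) + 1 := by ring
  rw [hcard, sum_eulerian_mul (by lia) (fun i => (i : ℚ) ^ k), sum_descentCount_pow (by lia)]
  congr 1
  simp only [mul_assoc, ← mul_sum, sum_eulerian_mul (Nat.succ_ne_zero _)]
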